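/- Let G be a finite group with π_e(G) ⊆ {1,2,3,4,6} whose cyclic subgroups of order 6 are exactly the three subgroups ⟨a⟩, ⟨b⟩, ⟨c⟩, where a, b, c have order 6 and a² = b² = c². Suppose a³ ∉ Z(G), the subgroup C_G(a³) ∩ C_G(b³) has index 2 in C_G(a³), and a³ ∉ C_G(a³) ∩ C_G(b³). Then G is isomorphic to S_3 × Z_3. -/

import Mathlib

/-- powers of an element of exponent 3, as a homomorphism from `ZMod 3` -/
def cubeHom {G : Type} [Group G] (p : G) (hp : p ^ 3 = 1) : Multiplicative (ZMod 3) →* G :=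
  MonoidHom.mk' (fun i => p ^ (i.toAdd).val) (by
    intro i j
    rw [← pow_add, toAdd_mul, ZMod.val_add]
    conv_rhs => rw [← Nat.mod_add_div (i.toAdd.val + j.toAdd.val) 3, pow_add, pow_mul, hp]
    simp)

theorem cubeHom_conj {G : Type} [Group G] (x p : G) (hp : p ^ 3 = 1) (hx : x * x = 1)
    (hxp : x * p * x = p⁻¹) (i : ZMod 3) :
    cubeHom p hp (Multiplicative.ofAdd i) * x = x * cubeHom p hp (Multiplicative.ofAdd (-i)) := by
  have hxi : x⁻¹ = x := inv_eq_of_mul_eq_one_left hx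
  have h1 : x * cubeHom p hp (Multiplicative.ofAdd i) * x⁻¹
      = (cubeHom p hp (Multiplicative.ofAdd i))⁻¹ := by
    change x * p ^ (i.val) * x⁻¹ = (p ^ i.val)⁻¹
    rw [← conj_pow, hxi, hxp, inv_pow]
  rw [ofAdd_neg, map_inv, ← h1, hxi]
  simp only [← mul_assoc, hx, one_mul]

/-- homomorphism out of the dihedral group of order 6 -/
def dihHom {G : Type} [Group G] (x p : G) (hp : p ^ 3 = 1) (hx : x * x = 1)
    (hxp : x * p * x = p⁻¹) : DihedralGroup 3 →* G :=
  MonoidHom.mk' (fun d => match d with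
    | .r i => cubeHom p hp (Multiplicative.ofAdd i)
    | .sr i => x * cubeHom p hp (Multiplicative.ofAdd i)) (by
    have hc := cubeHom_conj x p hp hx hxp
    rintro (i | i) (j | j)
    · simp only [DihedralGroup.r_mul_r, ofAdd_add, map_mul]
    · simp only [DihedralGroup.r_mul_sr]
      rw [← mul_assoc, hc, mul_assoc, ← map_mul, ← ofAdd_add, neg_add_eq_sub]
    · simp only [DihedralGroup.sr_mul_r, ofAdd_add, map_mul, mul_assoc]
    · simp only [DihedralGroup.sr_mul_sr]
      rw [mul_assoc, ← mul_assoc _ x, hc, mul_assoc, ← map_mul, ← ofAdd_add, neg_add_eq_sub,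
        ← mul_assoc, hx, one_mul])

theorem dih_perm : Nonempty (DihedralGroup 3 ≃* Equiv.Perm (Fin 3)) := by
  refine ⟨MulEquiv.ofBijective (dihHom (Equiv.swap 0 1) (finRotate 3)
    (by decide) (by decide) (by decide)) ?_⟩
  rw [Fintype.bijective_iff_injective_and_card]
  constructor
  · decide
  · decide

/-- the abstract product statement -/
theorem prod_iso {G : Type} [Group G] (x y z : G) (hx : x * x = 1) (hy : y * y = 1)
    (hz : z ^ 3 = 1) (hz1 : z ≠ 1) (hxy : x * y * x = y * x * y) (hne : x * y ≠ y * x)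
    (hzx : Commute z x) (hzy : Commute z y)
    (hK : ∀ k, k * x = x * k → k * y = y * k → k ∈ Subgroup.zpowers z)
    (hconj : ∀ g u, (u = x ∨ u = y) →
      g * u * g⁻¹ = x ∨ g * u * g⁻¹ = y ∨ g * u * g⁻¹ = x * y * x) :
    Nonempty (G ≃* Equiv.Perm (Fin 3) × Multiplicative (ZMod 3)) := by
  obtain ⟨e⟩ := dih_perm
  have hp : (x * y) ^ 3 = 1 := by
    calc (x * y) ^ 3 = (x * y * x) * (y * x * y) := by simp only [pow_succ, pow_zero, one_mul, mul_assoc]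
      _ = (x * y * x) * (x * y * x) := by rw [hxy]
      _ = x * (y * (x * x) * y) * x := by group
      _ = 1 := by rw [hx, mul_one, hy, mul_one, hx]
  have hxi : x⁻¹ = x := inv_eq_of_mul_eq_one_left hx
  have hyi : y⁻¹ = y := inv_eq_of_mul_eq_one_left hy
  have hxp : x * (x * y) * x = (x * y)⁻¹ := by
    rw [mul_inv_rev, hxi, hyi, ← mul_assoc, hx, one_mul]
  have hxne : x ≠ y := fun h => hne (by rw [h])
  let f := dihHom x (x * y) hp hx hxp
  let q := cubeHom z hz
  have fval : f (.sr 0) = x ∧ f (.sr 1) = y ∧ f (.r 1) = x * y ∧ f (.sr 2) = x * y * x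
      ∧ f (.r 2) = y * x := by
    have h2 : f (.r 2) = y * x := by
      change (x * y) ^ 2 = y * x
      have : (x * y) ^ 2 = (x * y)⁻¹ := by
        rw [eq_inv_iff_mul_eq_one, ← pow_succ, hp]
      rw [this, mul_inv_rev, hxi, hyi]
    refine ⟨?_, ?_, ?_, ?_, h2⟩
    · change x * (x * y) ^ 0 = x
      simp
    · change x * (x * y) ^ 1 = y
      rw [pow_one, ← mul_assoc, hx, one_mul]
    · change (x * y) ^ 1 = x * y
      simp
    · change x * f (.r 2) = x * y * x
      rw [h2, mul_assoc]
  obtain ⟨fs0, fs1, fr1, fs2, fr2⟩ := fval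
  have fr0 : f (.r 0) = 1 := map_one f
  have fcases : ∀ d, d = .r 0 ∨ d = .r 1 ∨ d = .r 2 ∨ d = .sr 0 ∨ d = .sr 1 ∨
    d = (.sr 2 : DihedralGroup 3) := by decide
  have hcomm : ∀ m n, Commute (f m) (q n) := by
    intro m n
    have : Commute (f m) z := by
      have h1 := hzx.symm
      have h2 := hzy.symm
      rcases fcases m with h | h | h | h | h | h <;> subst h
      · rw [fr0]; exact Commute.one_left z
      · rw [fr1]; exact h1.mul_left h2
      · rw [fr2]; exact h2.mul_left h1
      · rwa [fs0]
      · rwa [fs1]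
      · rw [fs2]; exact (h1.mul_left h2).mul_left h1
    exact this.pow_right _
  have key : ∀ n, Commute (q n) x ∧ Commute (q n) y := by
    intro n
    have h1 := hcomm (.sr 0) n
    have h2 := hcomm (.sr 1) n
    rw [fs0] at h1
    rw [fs1] at h2
    exact ⟨h1.symm, h2.symm⟩
  have finj : ∀ d, Commute (f d) x → Commute (f d) y → d = 1 := by
    intro d c1 c2
    rcases fcases d with h | h | h | h | h | h <;> subst h
    · rfl
    · exfalso
      rw [fr1] at c1
      have := c1.eq
      rw [mul_assoc] at this
      exact hne (mul_left_cancel this).symm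
    · exfalso
      rw [fr2] at c1
      have := c1.eq
      rw [← mul_assoc] at this
      exact hne (mul_right_cancel this).symm
    · exfalso
      rw [fs0] at c2
      exact hne c2.eq
    · exfalso
      rw [fs1] at c1
      exact hne c1.eq.symm
    · exfalso
      rw [fs2] at c1
      have := c1.eq
      rw [mul_assoc, hx, mul_one, ← mul_assoc, ← mul_assoc, hx, one_mul] at this
      exact hne this
  have hz2 : z ^ 2 ≠ 1 := by
    intro h
    apply hz1
    rw [pow_succ, h, one_mul] at hz
    exact hz
  have qinj : ∀ n, q n = 1 → n = 1 := by
    intro n hn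
    have hc : ∀ n : Multiplicative (ZMod 3), n = 1 ∨ n = Multiplicative.ofAdd 1 ∨
      n = Multiplicative.ofAdd 2 := by decide
    rcases hc n with h | h | h <;> subst h
    · rfl
    · exact absurd ((pow_one z).symm.trans hn) hz1
    · exact absurd hn hz2
  have qsurj : ∀ k ∈ Subgroup.zpowers z, ∃ n, q n = k := by
    have : Subgroup.zpowers z ≤ q.range := by
      rw [Subgroup.zpowers_le]
      exact ⟨Multiplicative.ofAdd 1, pow_one z⟩
    intro k hk
    exact this hk
  let F := f.noncommCoprod q hcomm
  have hF : Function.Bijective F := by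
    constructor
    · rw [injective_iff_map_eq_one]
      rintro ⟨d, n⟩ h
      have h' : f d * q n = 1 := h
      have hd : f d = q n⁻¹ := by rw [map_inv]; exact eq_inv_of_mul_eq_one_left h'
      have : d = 1 := finj d (hd ▸ (key _).1) (hd ▸ (key _).2)
      subst this
      rw [map_one, one_mul] at h'
      rw [qinj n h']
      rfl
    · intro g
      have fin : ∀ d, g * x * g⁻¹ = f d * x * (f d)⁻¹ → g * y * g⁻¹ = f d * y * (f d)⁻¹ →
          ∃ a, F a = g := by
        intro d h1 h2
        have aux : ∀ u, g * u * g⁻¹ = f d * u * (f d)⁻¹ →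
            ((f d)⁻¹ * g) * u = u * ((f d)⁻¹ * g) := by
          intro u h
          calc ((f d)⁻¹ * g) * u = (f d)⁻¹ * (g * u * g⁻¹) * g := by group
            _ = _ := by rw [h]; group
        obtain ⟨n, hn⟩ := qsurj _ (hK _ (aux x h1) (aux y h2))
        refine ⟨(d, n), ?_⟩
        change f d * q n = g
        rw [hn]; group
      have hd : g * x * g⁻¹ ≠ g * y * g⁻¹ := by
        intro h
        exact hxne (mul_left_cancel (mul_right_cancel h))
      have s1 : ∀ t, x * (x * t) = t := fun t => by rw [← mul_assoc, hx, one_mul]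
      have s2 : ∀ t, y * (y * t) = t := fun t => by rw [← mul_assoc, hy, one_mul]
      have hxy' : y * (x * y) = x * (y * x) := by rw [← mul_assoc, ← hxy, mul_assoc]
      have s3 : ∀ t, y * (x * (y * t)) = x * (y * (x * t)) := fun t => by
        simpa only [mul_assoc] using congrArg (· * t) hxy'
      rcases hconj g x (Or.inl rfl) with h1 | h1 | h1 <;>
        rcases hconj g y (Or.inr rfl) with h2 | h2 | h2
      · exact absurd (h1.trans h2.symm) hd
      · apply fin (.r 0) <;> simp [fr0, h1, h2]
      · apply fin (.sr 0) <;> simp [fs0, h1, h2, hxi, hx, mul_assoc]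
      · apply fin (.sr 2) <;> simp [fs2, h1, h2, hxi, hyi, hx, hy, mul_assoc, s1, s2, s3, hxy']
      · exact absurd (h1.trans h2.symm) hd
      · apply fin (.r 1) <;> simp [fr1, h1, h2, hxi, hyi, hx, hy, mul_assoc, s1, s2, s3, hxy']
      · apply fin (.r 2) <;> simp [fr2, h1, h2, hxi, hyi, hx, hy, mul_assoc, s1, s2, s3, hxy']
      · apply fin (.sr 1) <;> simp [fs1, h1, h2, hxi, hyi, hx, hy, mul_assoc, s1, s2, s3, hxy']
      · exact absurd (h1.trans h2.symm) hd
  exact ⟨(MulEquiv.ofBijective F hF).symm.trans (e.prodCongr (MulEquiv.refl _))⟩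

theorem pow_of_mem {G : Type} [Group G] (u g : G) (hu : orderOf u = 6) (hg : orderOf g = 6)
    (h : g ∈ Subgroup.zpowers u) : g ^ 3 = u ^ 3 ∧ g ^ 2 ∈ Subgroup.zpowers (u ^ 2) := by
  obtain ⟨n, rfl⟩ := h
  have h6 : u ^ 6 = 1 := hu ▸ pow_orderOf_eq_one u
  have hs : u ^ 3 * u ^ 3 = 1 := by rw [← pow_add]; exact h6
  have e1 : (u ^ n) ^ 3 = (u ^ 3) ^ n := by
    rw [← zpow_natCast, ← zpow_natCast, ← zpow_mul, ← zpow_mul, mul_comm]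
  have e2 : (u ^ n) ^ 2 = (u ^ 2) ^ n := by
    rw [← zpow_natCast, ← zpow_natCast, ← zpow_mul, ← zpow_mul, mul_comm]
  refine ⟨?_, n, e2.symm⟩
  have hne : (u ^ n) ^ 3 ≠ 1 := by
    intro h
    have := orderOf_dvd_of_pow_eq_one h
    change orderOf (u ^ n) = 6 at hg
    rw [hg] at this
    omega
  change (u ^ n) ^ 3 = _
  rw [e1] at hne ⊢
  have hs2 : (u ^ 3) ^ (2 : ℤ) = 1 := by
    rw [zpow_two, hs]
  rcases Int.even_or_odd' n with ⟨k, rfl | rfl⟩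
  · exact absurd (by rw [zpow_mul, hs2, one_zpow]) hne
  · rw [zpow_add, zpow_mul, hs2, one_zpow, zpow_one, one_mul]

/-- Let `G` be a finite group with `π_e(G) ⊆ {1,2,3,4,6}` whose cyclic subgroups of
order 6 are exactly `⟨a⟩, ⟨b⟩, ⟨c⟩`, where `a, b, c` have order 6 and `a² = b² = c²`.
Suppose `a³ ∉ Z(G)`, the subgroup `C_G(a³) ∩ C_G(b³)` has index 2 in `C_G(a³)`, and
`a³ ∉ C_G(a³) ∩ C_G(b³)`. Then `G ≅ S_3 × Z_3`. -/
theorem iso_S3_times_Z3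
    (G : Type) [Group G] [Finite G] (a b c : G)
    (horders : ∀ g : G, orderOf g ∈ ({1, 2, 3, 4, 6} : Set ℕ))
    (ha : orderOf a = 6) (hb : orderOf b = 6) (hc : orderOf c = 6)
    (hab : Subgroup.zpowers a ≠ Subgroup.zpowers b)
    (hac : Subgroup.zpowers a ≠ Subgroup.zpowers c)
    (hbc : Subgroup.zpowers b ≠ Subgroup.zpowers c)
    (hset : {H : Subgroup G | IsCyclic H ∧ Nat.card H = 6} =
      {Subgroup.zpowers a, Subgroup.zpowers b, Subgroup.zpowers c})
    (hsq1 : a ^ 2 = b ^ 2) (hsq2 : b ^ 2 = c ^ 2)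
    (hZa : a ^ 3 ∉ Subgroup.center G)
    (hindex : (Subgroup.centralizer {a ^ 3} ⊓
      Subgroup.centralizer {b ^ 3}).relIndex (Subgroup.centralizer {a ^ 3}) = 2)
    (hnotmem : a ^ 3 ∉ Subgroup.centralizer {a ^ 3} ⊓ Subgroup.centralizer {b ^ 3}) :
    Nonempty (G ≃* Equiv.Perm (Fin 3) × Multiplicative (ZMod 3)) := by
  have h6 : ∀ g : G, orderOf g = 6 → (g ^ 3 = a ^ 3 ∨ g ^ 3 = b ^ 3 ∨ g ^ 3 = c ^ 3) ∧
      g ^ 2 ∈ Subgroup.zpowers (a ^ 2) := by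
    intro g hg
    have hm : Subgroup.zpowers g ∈ {H : Subgroup G | IsCyclic H ∧ Nat.card H = 6} :=
      ⟨inferInstance, by rw [Nat.card_zpowers, hg]⟩
    rw [hset] at hm
    have hgm := Subgroup.mem_zpowers g
    rcases hm with h | h | h
    · rw [h] at hgm
      have := pow_of_mem a g ha hg hgm
      exact ⟨Or.inl this.1, this.2⟩
    · rw [h] at hgm
      have := pow_of_mem b g hb hg hgm
      exact ⟨Or.inr (Or.inl this.1), hsq1 ▸ this.2⟩
    · rw [Set.mem_singleton_iff.1 h] at hgm
      have := pow_of_mem c g hc hg hgm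
      exact ⟨Or.inr (Or.inr this.1), hsq1 ▸ hsq2 ▸ this.2⟩
  have hne : a ^ 3 * b ^ 3 ≠ b ^ 3 * a ^ 3 := by
    intro h
    apply hnotmem
    simp only [Subgroup.mem_inf, Subgroup.mem_centralizer_singleton_iff]
    exact ⟨by trivial, by first | exact h | exact h.symm⟩
  have a6 : a ^ 6 = 1 := ha ▸ pow_orderOf_eq_one a
  have b6 : b ^ 6 = 1 := hb ▸ pow_orderOf_eq_one b
  have hx : a ^ 3 * a ^ 3 = 1 := by rw [← pow_add]; exact a6
  have hy : b ^ 3 * b ^ 3 = 1 := by rw [← pow_add]; exact b6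
  have hz : (a ^ 2) ^ 3 = 1 := by rw [← pow_mul]; exact a6
  have hz1 : a ^ 2 ≠ 1 := by
    intro h
    have := orderOf_dvd_of_pow_eq_one h
    rw [ha] at this
    omega
  have hzx : Commute (a ^ 2) (a ^ 3) := (Commute.refl a).pow_pow 2 3
  have hzy : Commute (a ^ 2) (b ^ 3) := by rw [hsq1]; exact (Commute.refl b).pow_pow 2 3
  have hx1 : a ^ 3 ≠ 1 := fun h => hne (by rw [h]; simp)
  have ox : orderOf (a ^ 3) = 2 := orderOf_eq_prime (by rw [pow_two, hx]) hx1
  have hconj6 : ∀ g u : G, orderOf u = 6 → g * u ^ 3 * g⁻¹ = a ^ 3 ∨ g * u ^ 3 * g⁻¹ = b ^ 3 ∨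
      g * u ^ 3 * g⁻¹ = c ^ 3 := by
    intro g u hu
    have : orderOf (g * u * g⁻¹) = 6 := by
      rw [← hu]
      exact MulEquiv.orderOf_eq (MulAut.conj g) u
    have := (h6 _ this).1
    rwa [conj_pow] at this
  have hxi : (a ^ 3)⁻¹ = a ^ 3 := inv_eq_of_mul_eq_one_left hx
  have hyi : (b ^ 3)⁻¹ = b ^ 3 := inv_eq_of_mul_eq_one_left hy
  have hw : a ^ 3 * b ^ 3 * a ^ 3 = c ^ 3 := by
    have h := hconj6 (a ^ 3) b hb
    rw [hxi] at h
    rcases h with h | h | h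
    · exfalso
      have h3 : b ^ 3 = a ^ 3 := by
        have h4 : a ^ 3 * b ^ 3 = 1 := mul_right_cancel (h.trans (one_mul _).symm)
        rw [eq_inv_of_mul_eq_one_right h4, hxi]
      exact hne (by rw [h3])
    · exfalso
      have h2 := congrArg (· * a ^ 3) h
      simp only [mul_assoc, hx, mul_one] at h2
      exact hne h2
    · exact h
  have hw' : b ^ 3 * a ^ 3 * b ^ 3 = c ^ 3 := by
    have h := hconj6 (b ^ 3) a ha
    rw [hyi] at h
    rcases h with h | h | h
    · exfalso
      have h2 := congrArg (· * b ^ 3) h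
      simp only [mul_assoc, hy, mul_one] at h2
      exact hne h2.symm
    · exfalso
      have h3 : a ^ 3 = b ^ 3 := by
        have h4 : b ^ 3 * a ^ 3 = 1 := mul_right_cancel (h.trans (one_mul _).symm)
        rw [eq_inv_of_mul_eq_one_right h4, hyi]
      exact hne (by rw [h3])
    · exact h
  have hxy := hw.trans hw'.symm
  have zcomm : ∀ k ∈ Subgroup.zpowers (a ^ 2), Commute k (a ^ 3) := by
    rintro k ⟨n, rfl⟩
    exact hzx.zpow_left n
  have prod6 : ∀ t p : G, orderOf t = 2 → orderOf p = 3 → Commute t p →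
      p ∈ Subgroup.zpowers (a ^ 2) := by
    intro t p ht hp htp
    have ho : orderOf (t * p) = 6 := by
      rw [htp.orderOf_mul_eq_mul_orderOf_of_coprime (by rw [ht, hp]; decide), ht, hp]
    have h := (h6 _ ho).2
    have t2 : t ^ 2 = 1 := ht ▸ pow_orderOf_eq_one t
    have p3 : p ^ 3 = 1 := hp ▸ pow_orderOf_eq_one p
    rw [htp.mul_pow, t2, one_mul] at h
    have := Subgroup.pow_mem _ h 2
    rwa [← pow_mul, show 2 * 2 = 3 + 1 from rfl, pow_succ p 3, p3, one_mul] at this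
  have p3 : (a ^ 3 * b ^ 3) ^ 3 = 1 := by
    generalize a ^ 3 = x at *
    generalize b ^ 3 = y at *
    calc (x * y) ^ 3 = (x * y * x) * (y * x * y) := by simp only [pow_succ, pow_zero, one_mul, mul_assoc]
      _ = (x * y * x) * (x * y * x) := by rw [hxy]
      _ = x * (y * (x * x) * y) * x := by group
      _ = 1 := by rw [hx, mul_one, hy, mul_one, hx]
  have pne : a ^ 3 * b ^ 3 ≠ 1 := by
    intro h
    apply hne
    have := eq_inv_of_mul_eq_one_left h
    rw [hyi] at this
    rw [this]
  have op : orderOf (a ^ 3 * b ^ 3) = 3 := orderOf_eq_prime p3 pne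
  have noinv : ∀ t, orderOf t = 2 → Commute t (a ^ 3) → Commute t (b ^ 3) → False := by
    intro t ht h1 h2
    have := (zcomm _ (prod6 t _ ht op (h1.mul_right h2))).eq
    rw [mul_assoc] at this
    exact hne (mul_left_cancel this).symm
  refine prod_iso (a ^ 3) (b ^ 3) (a ^ 2) hx hy hz hz1 hxy hne hzx hzy ?_ ?_
  · intro k h1 h2
    have h1 : Commute k (a ^ 3) := h1
    have h2 : Commute k (b ^ 3) := h2
    have ho := horders k
    simp only [Set.mem_insert_iff, Set.mem_singleton_iff] at ho
    rcases ho with h | h | h | h | h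
    · rw [orderOf_eq_one_iff.1 h]
      exact one_mem _
    · exact (noinv k h h1 h2).elim
    · exact prod6 _ k ox h h1.symm
    · refine (noinv (k ^ 2) ?_ (h1.pow_left 2) (h2.pow_left 2)).elim
      rw [orderOf_pow' _ (by decide), h]; rfl
    · refine (noinv (k ^ 3) ?_ (h1.pow_left 3) (h2.pow_left 3)).elim
      rw [orderOf_pow' _ (by decide), h]; rfl
  · rintro g u (rfl | rfl)
    · rw [hw]; exact hconj6 g a ha
    · rw [hw]; exact hconj6 g b hb
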